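/- Let ω ∈ D̂, 0 < p < ∞ and α ∈ ℝ. Then there exist constants c, C > 0 such that for all s ∈ (0,1): c (∫_0^s dt/(ω̂(t)^p (1-t)^α) + 1) ≤ Σ_{n=0}^∞ (n+1)^{α-2} s^n / (ω_{2n+1})^p ≤ C (∫_0^s dt/(ω̂(t)^p (1-t)^α) + 1). -/

import Mathlib

open MeasureTheory

/-- The tail integral of a radial weight. -/
noncomputable def hat (ω : ℝ → ℝ) (r : ℝ) : ℝ := ∫ s in r..1, ω s

/-- The x-th moment of a radial weight. -/
noncomputable def moment (ω : ℝ → ℝ) (x : ℝ) : ℝ := ∫ r in (0:ℝ)..1, r ^ x * ω r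

theorem ii_sub {f : ℝ → ℝ} (hω_int : IntervalIntegrable f volume 0 1) {x y : ℝ} (hx : 0 ≤ x)
    (hxy : x ≤ y) (hy : y ≤ 1) : IntervalIntegrable f volume x y := by
  apply hω_int.mono_set
  rw [Set.uIcc_of_le hxy, Set.uIcc_of_le zero_le_one]
  exact Set.Icc_subset_Icc hx hy

theorem ii_pow {ω : ℝ → ℝ} (hω_int : IntervalIntegrable ω volume 0 1) (k : ℕ) {x y : ℝ} (hx : 0 ≤ x)
    (hxy : x ≤ y) (hy : y ≤ 1) : IntervalIntegrable (fun r => r ^ k * ω r) volume x y :=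
  (ii_sub hω_int hx hxy hy).continuousOn_mul (by fun_prop)

theorem hat_anti {ω : ℝ → ℝ} (hω_nonneg : ∀ r ∈ Set.Ico (0:ℝ) 1, 0 ≤ ω r)
    (hω_int : IntervalIntegrable ω volume 0 1) {x y : ℝ} (hx : 0 ≤ x)
    (hxy : x ≤ y) (hy : y ≤ 1) : hat ω y ≤ hat ω x := by
  unfold hat
  rw [← intervalIntegral.integral_add_adjacent_intervals (ii_sub hω_int hx hxy hy)
    (ii_sub hω_int (hx.trans hxy) hy le_rfl)]
  have := intervalIntegral.integral_mono_on_of_le_Ioo (μ := volume) (f := fun _ => (0:ℝ)) hxy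
    (by simp) (ii_sub hω_int hx hxy hy)
    (fun r hr => hω_nonneg r ⟨hx.trans hr.1.le, hr.2.trans_le hy⟩)
  simp at this
  linarith

theorem hat_grow {ω : ℝ → ℝ} (hω_nonneg : ∀ r ∈ Set.Ico (0:ℝ) 1, 0 ≤ ω r)
    (hω_int : IntervalIntegrable ω volume 0 1) {C : ℝ} (hC : 1 < C)
    (hD : ∀ r ∈ Set.Ico (0:ℝ) 1, hat ω r ≤ C * hat ω ((1 + r) / 2)) (k : ℕ) :
    ∀ r t : ℝ, 0 ≤ r → r < 1 → 0 ≤ t → t < 1 → 1 - r ≤ 2 ^ k * (1 - t) →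
      hat ω r ≤ C ^ k * hat ω t := by
  induction k with
  | zero =>
    intro r t hr hr1 ht ht1 h
    simp at h ⊢
    exact hat_anti hω_nonneg hω_int ht (by linarith) hr1.le
  | succ k ih =>
    intro r t hr hr1 ht ht1 h
    rw [pow_succ] at h
    have := ih ((1 + r) / 2) t (by linarith) (by linarith) ht ht1 (by linarith)
    refine (hD r ⟨hr, hr1⟩).trans ?_
    rw [pow_succ', mul_assoc]
    gcongr

theorem hat_poly {ω : ℝ → ℝ} (hω_nonneg : ∀ r ∈ Set.Ico (0:ℝ) 1, 0 ≤ ω r)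
    (hω_int : IntervalIntegrable ω volume 0 1)
    (hω_pos : ∀ r ∈ Set.Ico (0:ℝ) 1, 0 < hat ω r) {C : ℝ} (hC : 1 < C)
    (hD : ∀ r ∈ Set.Ico (0:ℝ) 1, hat ω r ≤ C * hat ω ((1 + r) / 2)) (g : ℕ) (hg : C ≤ 2 ^ g)
    (r t R : ℝ) (hr : 0 ≤ r) (hr1 : r < 1) (ht : 0 ≤ t) (ht1 : t < 1) (hR : 1 ≤ R)
    (h : 1 - r ≤ R * (1 - t)) : hat ω r ≤ (2 * R) ^ g * hat ω t := by
  obtain ⟨k, hk1, hk2⟩ := exists_nat_pow_near hR (one_lt_two)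
  have hpos := hω_pos t ⟨ht, ht1⟩
  refine (hat_grow hω_nonneg hω_int hC hD (k + 1) r t hr hr1 ht ht1 (h.trans ?_)).trans ?_
  · have : 0 < 1 - t := by linarith
    gcongr
  · gcongr
    calc C ^ (k + 1) ≤ (2 ^ g) ^ (k + 1) := by gcongr
      _ = (2 * 2 ^ k) ^ g := by rw [← pow_mul, ← pow_succ', ← pow_mul, mul_comm]
      _ ≤ _ := by gcongr

theorem moment_eq (ω : ℝ → ℝ) (n : ℕ) :
    moment ω (2 * n + 1) = ∫ r in (0:ℝ)..1, r ^ (2 * n + 1) * ω r := by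
  unfold moment
  congr 1; ext r
  rw [show (2 * (n:ℝ) + 1) = ((2 * n + 1 : ℕ) : ℝ) by push_cast; ring, Real.rpow_natCast]

theorem exp_low (k : ℕ) : Real.exp (-1) ≤ (1 - 1 / ((k:ℝ) + 1)) ^ k := by
  rcases Nat.eq_zero_or_pos k with h | h
  · subst h; simp
  · have hN0 : (0:ℝ) < k := by exact_mod_cast h
    have : (1 + 1 / (k:ℝ)) ^ k ≤ Real.exp 1 := by
      have h := Real.add_one_le_exp (1 / (k:ℝ))
      have h' := pow_le_pow_left₀ (by positivity) h k
      rw [← Real.exp_nat_mul, mul_one_div_cancel hN0.ne', add_comm] at h'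
      exact h'
    have e : (1 - 1 / ((k:ℝ) + 1)) ^ k = 1 / (1 + 1 / (k:ℝ)) ^ k := by
      rw [← one_div_pow]; congr 1; field_simp; ring
    rw [e, Real.exp_neg, ← one_div]
    exact one_div_le_one_div_of_le (by positivity) this

theorem moment_lower {ω : ℝ → ℝ} (hω_nonneg : ∀ r ∈ Set.Ico (0:ℝ) 1, 0 ≤ ω r)
    (hω_int : IntervalIntegrable ω volume 0 1)
    {C : ℝ} (hC : 1 < C)
    (hD : ∀ r ∈ Set.Ico (0:ℝ) 1, hat ω r ≤ C * hat ω ((1 + r) / 2)) (n : ℕ) :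
    hat ω (1 - 1 / ((n:ℝ) + 1)) ≤ C * Real.exp 1 * moment ω (2 * n + 1) := by
  have hn : (0:ℝ) ≤ n := by positivity
  have h1 : 1 / ((n:ℝ) + 1) ≤ 1 := by rw [div_le_one (by positivity)]; linarith
  have h2 : 0 < 1 / ((n:ℝ) + 1) := by positivity
  refine (hD _ ⟨by linarith, by linarith⟩).trans ?_
  rw [mul_assoc]
  gcongr
  set u : ℝ := (1 + (1 - 1 / ((n:ℝ) + 1))) / 2 with hu
  have hu0 : 0 ≤ u := by rw [hu]; linarith
  have hu1 : u ≤ 1 := by rw [hu]; linarith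
  have hup : Real.exp (-1) ≤ u ^ (2 * n + 1) := by
    have := exp_low (2 * n + 1)
    convert this using 2
    rw [hu]; push_cast; field_simp; ring
  rw [moment_eq, ← intervalIntegral.integral_add_adjacent_intervals
    (ii_pow hω_int _ le_rfl hu0 hu1) (ii_pow hω_int _ hu0 hu1 le_rfl)]
  have i1 : 0 ≤ ∫ r in (0:ℝ)..u, r ^ (2 * n + 1) * ω r := by
    have := intervalIntegral.integral_mono_on_of_le_Ioo (μ := volume) (f := fun _ => (0:ℝ)) hu0
      (by simp) (ii_pow hω_int (2 * n + 1) le_rfl hu0 hu1)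
      (fun r hr => mul_nonneg (pow_nonneg hr.1.le _) (hω_nonneg r ⟨hr.1.le, hr.2.trans_le hu1⟩))
    simpa using this
  have i2 : Real.exp (-1) * hat ω u ≤ ∫ r in u..1, r ^ (2 * n + 1) * ω r := by
    unfold hat
    rw [← intervalIntegral.integral_const_mul]
    apply intervalIntegral.integral_mono_on_of_le_Ioo hu1
      ((ii_sub hω_int hu0 hu1 le_rfl).const_mul _) (ii_pow hω_int _ hu0 hu1 le_rfl)
    intro r hr
    have := hω_nonneg r ⟨hu0.trans hr.1.le, hr.2⟩
    gcongr
    exact hup.trans (pow_le_pow_left₀ hu0 hr.1.le _)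
  have : Real.exp 1 * Real.exp (-1) = 1 := by rw [← Real.exp_add]; simp
  calc hat ω u = Real.exp 1 * (Real.exp (-1) * hat ω u) := by rw [← mul_assoc, this, one_mul]
    _ ≤ _ := by gcongr; linarith

theorem moment_upper {ω : ℝ → ℝ} (hω_nonneg : ∀ r ∈ Set.Ico (0:ℝ) 1, 0 ≤ ω r)
    (hω_int : IntervalIntegrable ω volume 0 1)
    (hω_pos : ∀ r ∈ Set.Ico (0:ℝ) 1, 0 < hat ω r) {C : ℝ} (hC : 1 < C)
    (hD : ∀ r ∈ Set.Ico (0:ℝ) 1, hat ω r ≤ C * hat ω ((1 + r) / 2)) :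
    ∃ B > 0, ∀ n : ℕ, moment ω (2 * n + 1) ≤ B * hat ω (1 - 1 / ((n:ℝ) + 1)) := by
  obtain ⟨g, hg⟩ := pow_unbounded_of_one_lt C (one_lt_two)
  set L := g + 1 with hL
  set D : ℝ := C * L.factorial * 2 ^ L with hDdef
  have hDpos : 0 < D := by positivity
  have hDk : ∀ k : ℕ, C ^ (k + 1) * Real.exp (-(2 ^ k / 2)) ≤ D * (1 / 2) ^ k := by
    intro k
    have e := Real.pow_div_factorial_le_exp (2 ^ k / 2) (by positivity) L
    rw [div_le_iff₀ (by positivity)] at e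
    rw [Real.exp_neg, ← div_eq_mul_inv, div_le_iff₀ (Real.exp_pos _)]
    have c1 : C ^ k * 2 ^ k ≤ 2 ^ L * (2 ^ k / 2) ^ L := by
      rw [← mul_pow, ← mul_pow, mul_div_cancel₀ _ (two_ne_zero), ← pow_mul, mul_comm k L, pow_mul]
      gcongr
      rw [hL, pow_succ]
      linarith
    have c2 : C ^ k ≤ 2 ^ L * (1 / 2) ^ k * (2 ^ k / 2) ^ L := by
      have : (1 / 2 : ℝ) ^ k * 2 ^ k = 1 := by rw [← mul_pow]; norm_num
      calc C ^ k = (1 / 2 : ℝ) ^ k * (C ^ k * 2 ^ k) := by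
            rw [mul_comm (C ^ k), ← mul_assoc, this, one_mul]
        _ ≤ (1 / 2 : ℝ) ^ k * (2 ^ L * (2 ^ k / 2) ^ L) := by gcongr
        _ = _ := by ring
    calc C ^ (k + 1) = C * C ^ k := pow_succ' _ _
      _ ≤ C * (2 ^ L * (1 / 2) ^ k * (2 ^ k / 2) ^ L) := by gcongr
      _ ≤ C * (2 ^ L * (1 / 2) ^ k * (Real.exp (2 ^ k / 2) * L.factorial)) := by gcongr
      _ = _ := by rw [hDdef]; ring
  refine ⟨1 + 2 * D, by positivity, fun n => ?_⟩
  have hn : (0:ℝ) ≤ n := by positivity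
  have h1 : 1 / ((n:ℝ) + 1) ≤ 1 := by rw [div_le_one (by positivity)]; linarith
  have h2 : 0 < 1 / ((n:ℝ) + 1) := by positivity
  set t : ℝ := 1 - 1 / ((n:ℝ) + 1) with ht
  have ht0 : 0 ≤ t := by linarith
  have ht1 : t < 1 := by linarith
  have hpos := hω_pos t ⟨ht0, ht1⟩
  have key : ∀ k : ℕ, ∀ u : ℝ, 0 ≤ u → u < 1 → 1 - u ≤ 2 ^ k * (1 - t) →
      ∫ r in u..1, r ^ (2 * n + 1) * ω r ≤ (1 + 2 * D - 2 * D * (1 / 2) ^ k) * hat ω t := by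
    intro k
    induction k with
    | zero =>
      intro u hu0 hu1 h
      simp at h
      have h' := hat_anti hω_nonneg hω_int ht0 (by linarith) hu1.le
      have : ∫ r in u..1, r ^ (2 * n + 1) * ω r ≤ hat ω u := by
        apply intervalIntegral.integral_mono_on_of_le_Ioo hu1.le
          (ii_pow hω_int _ hu0 hu1.le le_rfl) (ii_sub hω_int hu0 hu1.le le_rfl)
        intro r hr
        have h0 : 0 ≤ r := hu0.trans hr.1.le
        exact mul_le_of_le_one_left (hω_nonneg r ⟨h0, hr.2⟩) (pow_le_one₀ h0 hr.2.le)
      simp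
      linarith
    | succ k ih =>
      intro u hu0 hu1 h
      by_cases hc : 1 - u ≤ 2 ^ k * (1 - t)
      · refine (ih u hu0 hu1 hc).trans ?_
        gcongr ?_ * _
        rw [pow_succ]
        have : 0 ≤ D * (1 / 2) ^ k := by positivity
        linarith
      · push Not at hc
        set v := (1 + u) / 2 with hv
        have hv0 : 0 ≤ v := by linarith
        have hv1 : v < 1 := by linarith
        have huv : u ≤ v := by linarith
        rw [pow_succ] at h
        have I1 := ih v hv0 hv1 (by linarith)
        rw [← intervalIntegral.integral_add_adjacent_intervals
          (ii_pow hω_int _ hu0 huv hv1.le) (ii_pow hω_int _ hv0 hv1.le le_rfl)]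
        have I2 : ∫ r in u..v, r ^ (2 * n + 1) * ω r ≤ v ^ (2 * n + 1) * hat ω u := by
          have J : ∫ r in u..v, r ^ (2 * n + 1) * ω r ≤ ∫ r in u..v, v ^ (2 * n + 1) * ω r := by
            apply intervalIntegral.integral_mono_on_of_le_Ioo huv
              (ii_pow hω_int _ hu0 huv hv1.le) ((ii_sub hω_int hu0 huv hv1.le).const_mul _)
            intro r hr
            have h0 : 0 ≤ r := hu0.trans hr.1.le
            have := hω_nonneg r ⟨h0, hr.2.trans hv1⟩
            have := hr.2.le
            gcongr
          refine J.trans ?_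
          rw [intervalIntegral.integral_const_mul]
          gcongr
          have hsplit : hat ω u = (∫ r in u..v, ω r) + hat ω v := by
            unfold hat
            rw [intervalIntegral.integral_add_adjacent_intervals (ii_sub hω_int hu0 huv hv1.le)
              (ii_sub hω_int hv0 hv1.le le_rfl)]
          have := hω_pos v ⟨hv0, hv1⟩
          linarith
        have I3 : v ^ (2 * n + 1) ≤ Real.exp (-(2 ^ k / 2)) := by
          have e := Real.one_sub_le_exp_neg (1 - v)
          have e' := pow_le_pow_left₀ (by linarith) e (2 * n + 1)
          rw [← Real.exp_nat_mul] at e'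
          rw [sub_sub_cancel] at e'
          refine e'.trans (Real.exp_le_exp.2 ?_)
          push_cast
          have q1 : (1 - u) / 2 = 1 - v := by rw [hv]; ring
          have q2 : 2 ^ k * (1 / ((n:ℝ) + 1)) < 1 - u := by
            have : 1 - t = 1 / ((n:ℝ) + 1) := by rw [ht]; ring
            rwa [this] at hc
          have q3 : 2 ^ k < (1 - u) * ((n:ℝ) + 1) := by
            rw [mul_one_div, div_lt_iff₀ (by positivity)] at q2; exact q2
          have q4 : 0 ≤ (1 - u) * n := mul_nonneg (by linarith) hn
          rw [← q1]
          nlinarith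
        have I4 := hat_grow hω_nonneg hω_int hC hD (k + 1) u t hu0 hu1 ht0 ht1
          (by rw [pow_succ]; exact h)
        have hpu := hω_pos u ⟨hu0, hu1⟩
        have I5 : v ^ (2 * n + 1) * hat ω u ≤ D * (1 / 2) ^ k * hat ω t := by
          calc v ^ (2 * n + 1) * hat ω u
              ≤ Real.exp (-(2 ^ k / 2)) * (C ^ (k + 1) * hat ω t) := by gcongr
            _ = (C ^ (k + 1) * Real.exp (-(2 ^ k / 2))) * hat ω t := by ring
            _ ≤ _ := mul_le_mul_of_nonneg_right (hDk k) hpos.le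
        rw [pow_succ (1 / 2 : ℝ)]
        linarith
  obtain ⟨k, hk⟩ := pow_unbounded_of_one_lt ((n:ℝ) + 1) (one_lt_two)
  have := key k 0 le_rfl zero_lt_one (by
    have : 1 - t = 1 / ((n:ℝ) + 1) := by rw [ht]; ring
    rw [this, mul_one_div, le_div_iff₀ (by positivity)]; linarith)
  rw [moment_eq]
  refine this.trans ?_
  gcongr ?_ * _
  have : 0 ≤ D * (1 / 2) ^ k := by positivity
  linarith

set_option maxHeartbeats 2000000 in
/-- The abstract comparison. -/
theorem abs_cmp (a : ℕ → ℝ) (F : ℝ → ℝ) (A K : ℝ) (γ : ℕ) (hA : 0 < A) (hK : 0 < K)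
    (ha : ∀ n, 0 < a n)
    (hgrow : ∀ N n : ℕ, N ≤ n → a n ≤ K * (((n:ℝ) + 1) / (N + 1)) ^ γ * a N)
    (hF0 : F 0 = 0)
    (hmono : ∀ x y, 0 ≤ x → x ≤ y → y < 1 → F x ≤ F y)
    (h1 : ∀ n : ℕ, F (1 - 1 / ((n:ℝ) + 2)) - F (1 - 1 / ((n:ℝ) + 1)) ≤ A * a n)
    (h2 : ∀ n : ℕ, a n ≤ A * (F (1 - 1 / ((n:ℝ) + 2)) - F (1 - 1 / ((n:ℝ) + 1)))) :
    ∃ c > 0, ∃ C > 0, ∀ s ∈ Set.Ioo (0:ℝ) 1,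
      c * (F s + 1) ≤ (∑' n : ℕ, a n * s ^ n) ∧ (∑' n : ℕ, a n * s ^ n) ≤ C * (F s + 1) := by
  -- telescoping
  have T1 : ∀ N : ℕ, F (1 - 1 / ((N:ℝ) + 1)) ≤ A * ∑ n ∈ Finset.range N, a n := by
    intro N
    induction N with
    | zero => simp [hF0]
    | succ k ih =>
      rw [Finset.sum_range_succ]
      have := h1 k
      push_cast
      rw [show (k:ℝ) + 1 + 1 = k + 2 by ring]
      linarith
  have T2 : ∀ N : ℕ, ∑ n ∈ Finset.range N, a n ≤ A * F (1 - 1 / ((N:ℝ) + 1)) := by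
    intro N
    induction N with
    | zero => simp [hF0]
    | succ k ih =>
      rw [Finset.sum_range_succ]
      have := h2 k
      push_cast
      rw [show (k:ℝ) + 1 + 1 = k + 2 by ring]
      linarith
  -- locating N
  have loc : ∀ s ∈ Set.Ioo (0:ℝ) 1, ∃ N : ℕ, 1 - 1 / ((N:ℝ) + 1) ≤ s ∧ s ≤ 1 - 1 / ((N:ℝ) + 2) := by
    intro s hs
    have hs1 : 0 < 1 - s := by linarith [hs.2]
    have hx : 1 ≤ 1 / (1 - s) := by rw [le_div_iff₀ hs1]; linarith [hs.1]
    have hf : 1 ≤ ⌊1 / (1 - s)⌋₊ := Nat.le_floor (by simpa using hx)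
    obtain ⟨N, hN⟩ := Nat.exists_eq_add_of_le hf
    have l1 := Nat.floor_le (show 0 ≤ 1 / (1 - s) by positivity)
    have l2 := Nat.lt_floor_add_one (1 / (1 - s))
    rw [hN] at l1 l2
    push_cast at l1 l2
    refine ⟨N, ?_, ?_⟩
    · rw [le_div_iff₀ hs1] at l1
      have : 1 - s ≤ 1 / ((N:ℝ) + 1) := by rw [le_div_iff₀ (by positivity)]; linarith
      linarith
    · rw [div_lt_iff₀ hs1] at l2
      have : 1 / ((N:ℝ) + 2) ≤ 1 - s := by rw [div_le_iff₀ (by positivity)]; linarith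
      linarith
  -- tail termwise bound
  set D : ℝ := K * 4 ^ γ * (γ.factorial : ℝ) * Real.exp 1 with hD
  have hDpos : 0 < D := by positivity
  have tail : ∀ (s : ℝ) (N n : ℕ), 0 ≤ s → s ≤ 1 - 1 / ((N:ℝ) + 2) → N ≤ n →
      a n * s ^ n ≤ D * a N * (Real.exp (-(1 / (2 * ((N:ℝ) + 2))))) ^ n := by
    intro s N n hs0 hs hn
    set z : ℝ := 1 / (2 * ((N:ℝ) + 2)) with hz
    have hz0 : 0 < z := by positivity
    have hz1 : z ≤ 1 := by
      rw [hz, div_le_one (by positivity)]; have : (0:ℝ) ≤ N := by positivity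
      linarith
    have e1 : s ^ n ≤ Real.exp (-(2 * z) * n) := by
      rw [mul_comm, Real.exp_nat_mul]
      refine pow_le_pow_left₀ hs0 ?_ n
      have := Real.one_sub_le_exp_neg (2 * z)
      have h : 2 * z = 1 / ((N:ℝ) + 2) := by rw [hz]; field_simp
      rw [← h] at hs
      linarith
    have e2 : (((n:ℝ) + 1) / (N + 1)) ^ γ ≤ 4 ^ γ * ((γ.factorial : ℝ) * Real.exp (z * (n + 1))) := by
      have : ((n:ℝ) + 1) / (N + 1) ≤ 4 * (z * (n + 1)) := by
        rw [hz, div_le_iff₀ (by positivity)]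
        have : 4 * (1 / (2 * ((N:ℝ) + 2)) * (n + 1)) * (N + 1) = (n + 1) * (2 * (N + 1) / (N + 2)) := by
          field_simp; ring
        rw [this]
        have : 1 ≤ 2 * ((N:ℝ) + 1) / (N + 2) := by
          rw [le_div_iff₀ (by positivity)]; have : (0:ℝ) ≤ N := by positivity
          linarith
        have h0 : (0:ℝ) ≤ n + 1 := by positivity
        nlinarith
      calc (((n:ℝ) + 1) / (N + 1)) ^ γ ≤ (4 * (z * (n + 1))) ^ γ :=
            pow_le_pow_left₀ (by positivity) this γ
        _ = 4 ^ γ * (z * (n + 1)) ^ γ := by rw [mul_pow]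
        _ ≤ _ := by
          have := Real.pow_div_factorial_le_exp (z * (n + 1)) (by positivity) γ
          rw [div_le_iff₀ (by positivity)] at this
          gcongr
          linarith
    have e3 : Real.exp (z * (n + 1)) * Real.exp (-(2 * z) * n) ≤ Real.exp 1 * Real.exp (-z) ^ n := by
      rw [← Real.exp_nat_mul, ← Real.exp_add, ← Real.exp_add]
      apply Real.exp_le_exp.2
      linarith
    have haN := ha N
    calc a n * s ^ n ≤ (K * (((n:ℝ) + 1) / (N + 1)) ^ γ * a N) * Real.exp (-(2 * z) * n) := by
          apply mul_le_mul (hgrow N n hn) e1 (by positivity) (by positivity)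
      _ ≤ (K * (4 ^ γ * ((γ.factorial : ℝ) * Real.exp (z * (n + 1)))) * a N) * Real.exp (-(2 * z) * n) := by
          gcongr
      _ = K * 4 ^ γ * (γ.factorial : ℝ) * a N * (Real.exp (z * (n + 1)) * Real.exp (-(2 * z) * n)) := by ring
      _ ≤ K * 4 ^ γ * (γ.factorial : ℝ) * a N * (Real.exp 1 * Real.exp (-z) ^ n) := by gcongr
      _ = _ := by rw [hD]; ring
  have geo : ∀ N : ℕ, Summable (fun n => (Real.exp (-(1 / (2 * ((N:ℝ) + 2))))) ^ n) ∧
      ∑' n : ℕ, (Real.exp (-(1 / (2 * ((N:ℝ) + 2))))) ^ n ≤ 8 * ((N:ℝ) + 1) := by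
    intro N
    set z : ℝ := 1 / (2 * ((N:ℝ) + 2)) with hz
    have hz0 : 0 < z := by positivity
    have hlt : Real.exp (-z) < 1 := by rw [Real.exp_lt_one_iff]; linarith
    refine ⟨summable_geometric_of_lt_one (Real.exp_pos _).le hlt, ?_⟩
    rw [tsum_geometric_of_lt_one (Real.exp_pos _).le hlt]
    have : Real.exp (-z) ≤ 1 / (1 + z) := by
      rw [Real.exp_neg, ← one_div]
      apply one_div_le_one_div_of_le (by positivity)
      linarith [Real.add_one_le_exp z]
    have h3 : 1 - 1 / (1 + z) = 1 / (2 * (N:ℝ) + 5) := by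
      rw [hz]; field_simp; ring
    have h4 : 1 / (2 * (N:ℝ) + 5) ≤ 1 - Real.exp (-z) := by linarith
    rw [← one_div, div_le_iff₀ (by linarith)]
    have h5 : 1 ≤ (8 * ((N:ℝ) + 1)) * (1 / (2 * (N:ℝ) + 5)) := by
      rw [mul_one_div, le_div_iff₀ (by positivity)]; have : (0:ℝ) ≤ N := by positivity
      linarith
    refine h5.trans ?_
    gcongr
  have summ : ∀ s ∈ Set.Ioo (0:ℝ) 1, Summable (fun n => a n * s ^ n) := by
    intro s hs
    obtain ⟨N, -, hN⟩ := loc s hs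
    rw [← summable_nat_add_iff N]
    have := ((summable_nat_add_iff N).2 (geo N).1).mul_left (D * a N)
    refine Summable.of_nonneg_of_le (fun n => ?_) (fun n => ?_) this
    · have := ha (n + N); have := hs.1; positivity
    · exact tail s N (n + N) hs.1.le hN (by omega)
  -- half range
  have half : ∀ N : ℕ, (N:ℝ) / 2 * a N ≤ K * 2 ^ γ * ∑ n ∈ Finset.range N, a n := by
    intro N
    have hsub : ∑ n ∈ Finset.Ico (N / 2) N, a n ≤ ∑ n ∈ Finset.range N, a n := by
      apply Finset.sum_le_sum_of_subset_of_nonneg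
      · intro x hx; simp at hx ⊢; exact hx.2
      · intro i _ _; exact (ha i).le
    have hb : (N:ℝ) / 2 * a N ≤ ∑ n ∈ Finset.Ico (N / 2) N, K * 2 ^ γ * a n := by
      have hc : ((Finset.Ico (N / 2) N).card : ℝ) * a N ≤ ∑ n ∈ Finset.Ico (N / 2) N, K * 2 ^ γ * a n := by
        rw [← nsmul_eq_mul]
        apply Finset.card_nsmul_le_sum
        intro n hn
        simp at hn
        refine (hgrow n N hn.2.le).trans ?_
        have := ha n
        gcongr
        rw [div_le_iff₀ (by positivity)]
        have : N + 1 ≤ 2 * (n + 1) := by omega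
        exact_mod_cast this
      refine le_trans ?_ hc
      have := ha N
      gcongr
      rw [Nat.card_Ico, div_le_iff₀ (by norm_num)]
      have : N ≤ (N - N / 2) * 2 := by omega
      exact_mod_cast this
    rw [← Finset.mul_sum] at hb
    refine hb.trans ?_
    gcongr
  have ha0 := ha 0
  refine ⟨1 / (A * Real.exp 1 + 1 / a 0), by positivity,
    A + D * 8 * (4 * K * 2 ^ γ * A + a 0), by positivity, ?_⟩
  intro s hs
  obtain ⟨N, hN1, hN2⟩ := loc s hs
  have hS := summ s hs
  have hs0 := hs.1
  have hN2' : 1 - 1 / ((N:ℝ) + 2) < 1 := by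
    have : 0 < 1 / ((N:ℝ) + 2) := by positivity
    linarith
  have tN0 : 0 ≤ 1 - 1 / ((N:ℝ) + 1) := by
    have : 1 / ((N:ℝ) + 1) ≤ 1 := by
      rw [div_le_one (by positivity)]; have : (0:ℝ) ≤ N := by positivity
      linarith
    linarith
  have nn : ∀ n, 0 ≤ a n * s ^ n := fun n => by have := ha n; positivity
  have hFs : F (1 - 1 / ((N:ℝ) + 1)) ≤ F s := hmono _ _ tN0 hN1 hs.2
  have hFs0 : 0 ≤ F s := by have := hmono 0 s le_rfl hs0.le hs.2; rwa [hF0] at this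
  constructor
  · -- lower bound
    rw [one_div, inv_mul_le_iff₀ (by positivity), add_mul]
    have p1 : F s ≤ A * ∑ n ∈ Finset.range (N + 1), a n := by
      refine (hmono s _ hs0.le hN2 hN2').trans ?_
      have := T1 (N + 1)
      push_cast at this
      rwa [show (N:ℝ) + 1 + 1 = N + 2 by ring] at this
    have p2 : ∑ n ∈ Finset.range (N + 1), a n ≤ Real.exp 1 * ∑ n ∈ Finset.range (N + 1), a n * s ^ n := by
      rw [Finset.mul_sum]
      apply Finset.sum_le_sum
      intro n hn
      have hn : n ≤ N := by simp at hn; omega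
      have q : 1 ≤ Real.exp 1 * s ^ n := by
        have q1 : s ^ N ≤ s ^ n := pow_le_pow_of_le_one hs0.le hs.2.le hn
        have q2 : (1 - 1 / ((N:ℝ) + 1)) ^ N ≤ s ^ N := pow_le_pow_left₀ tN0 hN1 N
        have q3 : 1 ≤ Real.exp 1 * (1 - 1 / ((N:ℝ) + 1)) ^ N := by
          rcases Nat.eq_zero_or_pos N with h | h
          · subst h; simp
          · have hN0 : (0:ℝ) < N := by exact_mod_cast h
            have : (1 + 1 / (N:ℝ)) ^ N ≤ Real.exp 1 := by
              have h := Real.add_one_le_exp (1 / (N:ℝ))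
              have h' := pow_le_pow_left₀ (by positivity) h N
              rw [← Real.exp_nat_mul, mul_one_div_cancel hN0.ne', add_comm] at h'
              exact h'
            have e : (1 - 1 / ((N:ℝ) + 1)) ^ N = 1 / (1 + 1 / (N:ℝ)) ^ N := by
              rw [← one_div_pow]; congr 1; field_simp; ring
            rw [e, mul_one_div, le_div_iff₀ (by positivity)]; linarith
        refine q3.trans ?_
        gcongr
        exact q2.trans q1
      have := ha n
      nlinarith
    have p3 := hS.sum_le_tsum (Finset.range (N + 1)) (fun n _ => nn n)
    have p4 : a 0 ≤ ∑' n, a n * s ^ n := by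
      have := hS.sum_le_tsum (Finset.range 1) (fun n _ => nn n)
      simpa using this
    have p5 : 1 ≤ 1 / a 0 * ∑' n, a n * s ^ n := by
      rw [one_div, ← div_eq_inv_mul, le_div_iff₀ ha0]; linarith
    have p6 : F s ≤ A * Real.exp 1 * ∑' n, a n * s ^ n := by
      refine p1.trans ?_
      rw [mul_assoc]
      gcongr
      refine p2.trans ?_
      gcongr
    linarith
  · -- upper bound
    rw [← hS.sum_add_tsum_nat_add N]
    have p1 : ∑ n ∈ Finset.range N, a n ≤ A * F s := (T2 N).trans (by gcongr)
    have p2 : ∑ n ∈ Finset.range N, a n * s ^ n ≤ ∑ n ∈ Finset.range N, a n := by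
      apply Finset.sum_le_sum
      intro n _
      have := pow_le_one₀ hs0.le hs.2.le (n := n)
      have := ha n
      nlinarith
    have p3 : ∑' n, a (n + N) * s ^ (n + N) ≤ D * a N * (8 * ((N:ℝ) + 1)) := by
      have g := geo N
      have g2 := (summable_nat_add_iff N).2 g.1
      calc ∑' n, a (n + N) * s ^ (n + N)
          ≤ ∑' n, D * a N * (Real.exp (-(1 / (2 * ((N:ℝ) + 2))))) ^ (n + N) := by
            refine Summable.tsum_le_tsum (fun n => tail s N (n + N) hs0.le hN2 (by omega))
              ((summable_nat_add_iff N).2 hS) (g2.mul_left _)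
        _ = D * a N * ∑' n, (Real.exp (-(1 / (2 * ((N:ℝ) + 2))))) ^ (n + N) := tsum_mul_left
        _ ≤ _ := by
          have := ha N
          gcongr
          refine le_trans ?_ g.2
          rw [← g.1.sum_add_tsum_nat_add N]
          have : 0 ≤ ∑ i ∈ Finset.range N, (Real.exp (-(1 / (2 * ((N:ℝ) + 2))))) ^ i := by positivity
          linarith
    have p4 : ((N:ℝ) + 1) * a N ≤ (4 * K * 2 ^ γ * A) * F s + a 0 := by
      rcases Nat.eq_zero_or_pos N with h | h
      · subst h
        have : 0 ≤ (4 * K * 2 ^ γ * A) * F s := by positivity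
        simpa using this
      · have hN0 : (1:ℝ) ≤ N := by exact_mod_cast h
        have := half N
        have haN := ha N
        have r : K * 2 ^ γ * ∑ n ∈ Finset.range N, a n ≤ K * 2 ^ γ * (A * F s) := by gcongr
        nlinarith
    have p5 : D * a N * (8 * ((N:ℝ) + 1)) ≤ D * 8 * ((4 * K * 2 ^ γ * A) * F s + a 0) := by
      calc _ = D * 8 * (((N:ℝ) + 1) * a N) := by ring
        _ ≤ _ := by gcongr
    have p6 : D * 8 * ((4 * K * 2 ^ γ * A) * F s + a 0) ≤ D * 8 * (4 * K * 2 ^ γ * A + a 0) * (F s + 1) := by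
      rw [mul_assoc (D * 8)]
      gcongr
      have : 0 ≤ 4 * K * 2 ^ γ * A := by positivity
      nlinarith
    nlinarith

theorem rpow_half (θ α : ℝ) (h1 : 1 / 2 ≤ θ) (h2 : θ ≤ 1) :
    θ ^ α ≤ 2 ^ |α| ∧ (2 ^ |α|)⁻¹ ≤ θ ^ α := by
  have h0 : 0 < θ := by linarith
  have hi : θ⁻¹ ≤ 2 := by rw [inv_le_comm₀ h0 two_pos]; linarith
  have hi1 : 1 ≤ θ⁻¹ := (one_le_inv₀ h0).2 h2
  have a1 : ∀ β : ℝ, θ⁻¹ ^ β ≤ 2 ^ |β| := fun β =>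
    (Real.rpow_le_rpow_of_exponent_le hi1 (le_abs_self β)).trans
      (Real.rpow_le_rpow (by positivity) hi (abs_nonneg _))
  constructor
  · have := a1 (-α)
    rwa [abs_neg, Real.inv_rpow h0.le, Real.rpow_neg h0.le, inv_inv] at this
  · have := a1 α
    rw [Real.inv_rpow h0.le] at this
    rw [inv_le_comm₀ (by positivity) (by positivity)]
    exact this

theorem hat_cont {ω : ℝ → ℝ} (hω_int : IntervalIntegrable ω volume 0 1) :
    ContinuousOn (hat ω) (Set.Icc 0 1) := by
  have h := intervalIntegral.continuousOn_primitive_interval_left (μ := volume) (f := ω) (a := 0) (b := 1)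
  rw [Set.uIcc_of_le zero_le_one] at h
  exact h ((intervalIntegrable_iff_integrableOn_Icc_of_le zero_le_one).1 hω_int)

theorem h_int {ω : ℝ → ℝ} (p α : ℝ) (hω_int : IntervalIntegrable ω volume 0 1)
    (hω_pos : ∀ r ∈ Set.Ico (0:ℝ) 1, 0 < hat ω r) {x y : ℝ} (hx : 0 ≤ x) (hxy : x ≤ y) (hy : y < 1) :
    IntervalIntegrable (fun t => 1 / (hat ω t ^ p * (1 - t) ^ α)) volume x y := by
  apply ContinuousOn.intervalIntegrable
  rw [Set.uIcc_of_le hxy]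
  have hs : ∀ t ∈ Set.Icc x y, t ∈ Set.Ico (0:ℝ) 1 := fun t ht => ⟨hx.trans ht.1, ht.2.trans_lt hy⟩
  apply ContinuousOn.div continuousOn_const
  · apply ContinuousOn.mul
    · exact ((hat_cont hω_int).mono (fun t ht => ⟨(hs t ht).1, (hs t ht).2.le⟩)).rpow_const
        (fun t ht => Or.inl (hω_pos t (hs t ht)).ne')
    · exact ContinuousOn.rpow_const (by fun_prop)
        (fun t ht => Or.inl (by have := (hs t ht).2; linarith))
  · intro t ht
    have := hω_pos t (hs t ht)
    have : 0 < 1 - t := by have := (hs t ht).2; linarith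
    positivity

theorem piece {ω : ℝ → ℝ} (p α : ℝ) (hp : 0 < p) (hω_nonneg : ∀ r ∈ Set.Ico (0:ℝ) 1, 0 ≤ ω r)
    (hω_int : IntervalIntegrable ω volume 0 1)
    (hω_pos : ∀ r ∈ Set.Ico (0:ℝ) 1, 0 < hat ω r) {C : ℝ} (hC : 1 < C)
    (hD : ∀ r ∈ Set.Ico (0:ℝ) 1, hat ω r ≤ C * hat ω ((1 + r) / 2)) (n : ℕ) :
    (∫ t in (1 - 1 / ((n:ℝ) + 1))..(1 - 1 / ((n:ℝ) + 2)), 1 / (hat ω t ^ p * (1 - t) ^ α)) ≤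
      C ^ p * 2 ^ |α| * (((n:ℝ) + 1) ^ (α - 2) / hat ω (1 - 1 / ((n:ℝ) + 1)) ^ p) ∧
    ((n:ℝ) + 1) ^ (α - 2) / hat ω (1 - 1 / ((n:ℝ) + 1)) ^ p ≤ 2 * 2 ^ |α| *
    (∫ t in (1 - 1 / ((n:ℝ) + 1))..(1 - 1 / ((n:ℝ) + 2)), 1 / (hat ω t ^ p * (1 - t) ^ α)) := by
  have hn : (0:ℝ) ≤ n := by positivity
  have h1 : 1 / ((n:ℝ) + 1) ≤ 1 := by rw [div_le_one (by positivity)]; linarith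
  have h2 : 0 < 1 / ((n:ℝ) + 1) := by positivity
  have h3 : 0 < 1 / ((n:ℝ) + 2) := by positivity
  have h4 : 1 / ((n:ℝ) + 2) ≤ 1 / ((n:ℝ) + 1) := one_div_le_one_div_of_le (by positivity) (by linarith)
  have h5 : 1 / 2 ≤ ((n:ℝ) + 1) * (1 / ((n:ℝ) + 2)) := by
    rw [mul_one_div, le_div_iff₀ (by positivity)]; linarith
  have h6 : ((n:ℝ) + 1) * (1 / ((n:ℝ) + 1)) = 1 := by field_simp
  set x : ℝ := 1 - 1 / ((n:ℝ) + 1) with hx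
  set y : ℝ := 1 - 1 / ((n:ℝ) + 2) with hy
  set q : ℝ := (n:ℝ) + 1 with hq
  have hq0 : 0 < q := by positivity
  have hx0 : 0 ≤ x := by linarith
  have hxy : x ≤ y := by linarith
  have hy1 : y < 1 := by linarith
  have hH := hω_pos x ⟨hx0, by linarith⟩
  have hlen : y - x = 1 / (q * (q + 1)) := by
    rw [hy, hx, hq]; field_simp; ring
  have hqα : q ^ α = q ^ (α - 2) * (q * q) := by
    rw [← pow_two, ← Real.rpow_natCast q 2, ← Real.rpow_add hq0]; norm_num
  have bd : ∀ t ∈ Set.Ioo x y, 1 / (hat ω t ^ p * (1 - t) ^ α) ≤ C ^ p * 2 ^ |α| * (q ^ α / hat ω x ^ p) ∧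
      (2 ^ |α|)⁻¹ * (q ^ α / hat ω x ^ p) ≤ 1 / (hat ω t ^ p * (1 - t) ^ α) := by
    intro t ht
    have ht1 : 0 < 1 - t := by linarith [ht.2]
    have ht0 : 0 ≤ t := by linarith [ht.1]
    have hT := hω_pos t ⟨ht0, by linarith⟩
    have g1 : hat ω t ≤ hat ω x := hat_anti hω_nonneg hω_int hx0 ht.1.le (by linarith)
    have th1 : 1 / 2 ≤ q * (1 - t) := h5.trans (by gcongr; linarith [ht.2])
    have th2 : q * (1 - t) ≤ 1 := by
      rw [← h6]; gcongr; linarith [ht.1]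
    have g2 : hat ω x ≤ C * hat ω t := by
      have := hat_grow hω_nonneg hω_int hC hD 1 x t hx0 (by linarith) ht0 (by linarith) (by
        have e : 1 - x = 1 / q := by rw [hx]; ring
        rw [e, div_le_iff₀ hq0]; linarith)
      simpa using this
    obtain ⟨r1, r2⟩ := rpow_half _ α th1 th2
    rw [Real.mul_rpow hq0.le ht1.le] at r1 r2
    have G1 : hat ω t ^ p ≤ hat ω x ^ p := Real.rpow_le_rpow hT.le g1 hp.le
    have G2 : hat ω x ^ p ≤ C ^ p * hat ω t ^ p := by
      rw [← Real.mul_rpow (by linarith) hT.le]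
      exact Real.rpow_le_rpow hH.le g2 hp.le
    have P1 : 0 < hat ω t ^ p := by positivity
    have P2 : 0 < hat ω x ^ p := by positivity
    have P3 : 0 < (1 - t) ^ α := by positivity
    have P4 : 0 < q ^ α := by positivity
    have P5 : 0 < (2:ℝ) ^ |α| := by positivity
    have P6 : 0 < C ^ p := by positivity
    constructor
    · rw [div_le_iff₀ (by positivity)]
      have : 1 ≤ 2 ^ |α| * (q ^ α * (1 - t) ^ α) := by
        rwa [inv_le_iff_one_le_mul₀ P5, mul_comm] at r2
      calc (1:ℝ) = 1 * 1 := by ring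
        _ ≤ (2 ^ |α| * (q ^ α * (1 - t) ^ α)) * ((C ^ p * hat ω t ^ p) / hat ω x ^ p) := by
          apply mul_le_mul this _ zero_le_one (by positivity)
          rw [le_div_iff₀ P2]; linarith
        _ = _ := by ring
    · rw [le_div_iff₀ (by positivity)]
      calc (2 ^ |α|)⁻¹ * (q ^ α / hat ω x ^ p) * (hat ω t ^ p * (1 - t) ^ α)
          = ((2 ^ |α|)⁻¹ * (q ^ α * (1 - t) ^ α)) * (hat ω t ^ p / hat ω x ^ p) := by ring
        _ ≤ 1 * 1 := by
          apply mul_le_mul _ _ (by positivity) zero_le_one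
          · rw [inv_mul_le_iff₀ P5]; linarith
          · rw [div_le_one P2]; exact G1
        _ = 1 := by ring
  have hh := h_int p α hω_int hω_pos hx0 hxy hy1
  have U := intervalIntegral.integral_mono_on_of_le_Ioo hxy hh (by simp) (fun t ht => (bd t ht).1)
  have V := intervalIntegral.integral_mono_on_of_le_Ioo hxy (by simp) hh (fun t ht => (bd t ht).2)
  rw [intervalIntegral.integral_const, smul_eq_mul, hlen, hqα] at U V
  have P2 : 0 < hat ω x ^ p := by positivity
  have P5 : 0 < (2:ℝ) ^ |α| := by positivity
  have hb : 0 < q ^ (α - 2) / hat ω x ^ p := by positivity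
  have e : ∀ c : ℝ, 1 / (q * (q + 1)) * (c * (q ^ (α - 2) * (q * q) / hat ω x ^ p)) =
      c * (q ^ (α - 2) / hat ω x ^ p) * (q / (q + 1)) := by
    intro c; field_simp
  rw [e] at U V
  have f1 : q / (q + 1) ≤ 1 := by rw [div_le_one (by positivity)]; linarith
  have f2 : 1 / 2 ≤ q / (q + 1) := by rw [le_div_iff₀ (by positivity)]; linarith
  constructor
  · refine U.trans (mul_le_of_le_one_right (by positivity) f1)
  · calc q ^ (α - 2) / hat ω x ^ p
        = 2 * 2 ^ |α| * ((2 ^ |α|)⁻¹ * (q ^ (α - 2) / hat ω x ^ p) * (1 / 2)) := by field_simp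
      _ ≤ 2 * 2 ^ |α| * ((2 ^ |α|)⁻¹ * (q ^ (α - 2) / hat ω x ^ p) * (q / (q + 1))) := by gcongr
      _ ≤ _ := by gcongr

theorem sum_vs_integral_estimate (ω : ℝ → ℝ) (p α : ℝ) (hp : 0 < p)
    (hω_nonneg : ∀ r ∈ Set.Ico (0:ℝ) 1, 0 ≤ ω r)
    (hω_int : IntervalIntegrable ω volume 0 1)
    (hω_pos : ∀ r ∈ Set.Ico (0:ℝ) 1, 0 < hat ω r)
    (hDhat : ∃ C > 1, ∀ r ∈ Set.Ico (0:ℝ) 1, hat ω r ≤ C * hat ω ((1 + r) / 2)) :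
    ∃ c > 0, ∃ C > 0, ∀ s ∈ Set.Ioo (0:ℝ) 1,
      c * ((∫ t in (0:ℝ)..s, 1 / (hat ω t ^ p * (1 - t) ^ α)) + 1) ≤
        (∑' n : ℕ, ((n : ℝ) + 1) ^ (α - 2) * s ^ n / moment ω (2 * n + 1) ^ p) ∧
      (∑' n : ℕ, ((n : ℝ) + 1) ^ (α - 2) * s ^ n / moment ω (2 * n + 1) ^ p) ≤
        C * ((∫ t in (0:ℝ)..s, 1 / (hat ω t ^ p * (1 - t) ^ α)) + 1) := by
  obtain ⟨C, hC, hD⟩ := hDhat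
  obtain ⟨B, hB, hmu⟩ := moment_upper hω_nonneg hω_int hω_pos hC hD
  have hml := moment_lower hω_nonneg hω_int hC hD
  set E : ℝ := C * Real.exp 1 with hE
  have hE0 : 0 < E := by positivity
  have hT : ∀ n : ℕ, (1 - 1 / ((n:ℝ) + 1)) ∈ Set.Ico (0:ℝ) 1 := by
    intro n
    have hn : (0:ℝ) ≤ n := by positivity
    have h1 : 1 / ((n:ℝ) + 1) ≤ 1 := by rw [div_le_one (by positivity)]; linarith
    have h2 : 0 < 1 / ((n:ℝ) + 1) := by positivity
    exact ⟨by linarith, by linarith⟩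
  have hHpos : ∀ n : ℕ, 0 < hat ω (1 - 1 / ((n:ℝ) + 1)) := fun n => hω_pos _ (hT n)
  have hmpos : ∀ n : ℕ, 0 < moment ω (2 * n + 1) := fun n =>
    pos_of_mul_pos_right ((hHpos n).trans_le (hml n)) hE0.le
  set b : ℕ → ℝ := fun n => ((n:ℝ) + 1) ^ (α - 2) / hat ω (1 - 1 / ((n:ℝ) + 1)) ^ p with hb
  set a : ℕ → ℝ := fun n => ((n:ℝ) + 1) ^ (α - 2) / moment ω (2 * n + 1) ^ p with ha
  have hbpos : ∀ n, 0 < b n := fun n => by have := hHpos n; simp only [hb]; positivity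
  have hapos : ∀ n, 0 < a n := fun n => by have := hmpos n; simp only [ha]; positivity
  have hab : ∀ n, a n ≤ E ^ p * b n := by
    intro n
    have h1 := hHpos n
    have h2 := hmpos n
    have := Real.rpow_le_rpow h1.le (hml n) hp.le
    rw [Real.mul_rpow hE0.le h2.le] at this
    simp only [ha, hb]
    rw [← mul_div_assoc, div_le_div_iff₀ (by positivity) (by positivity)]
    calc _ ≤ ((n:ℝ) + 1) ^ (α - 2) * (E ^ p * moment ω (2 * n + 1) ^ p) := by gcongr
      _ = _ := by ring
  have hba : ∀ n, b n ≤ B ^ p * a n := by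
    intro n
    have h1 := hHpos n
    have h2 := hmpos n
    have := Real.rpow_le_rpow h2.le (hmu n) hp.le
    rw [Real.mul_rpow hB.le h1.le] at this
    simp only [ha, hb]
    rw [← mul_div_assoc, div_le_div_iff₀ (by positivity) (by positivity)]
    calc _ ≤ ((n:ℝ) + 1) ^ (α - 2) * (B ^ p * hat ω (1 - 1 / ((n:ℝ) + 1)) ^ p) := by gcongr
      _ = _ := by ring
  obtain ⟨g, hg⟩ := pow_unbounded_of_one_lt C (one_lt_two)
  obtain ⟨γ, hγ⟩ := exists_nat_ge ((g:ℝ) * p + |α - 2|)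
  have hbg : ∀ N n : ℕ, N ≤ n → b n ≤ ((2:ℝ) ^ g) ^ p * (((n:ℝ) + 1) / (N + 1)) ^ γ * b N := by
    intro N n hNn
    have h1 := hHpos n
    have h2 := hHpos N
    set R : ℝ := ((n:ℝ) + 1) / (N + 1) with hR
    have hR1 : 1 ≤ R := by
      rw [hR, one_le_div (by positivity)]; gcongr
    have hR0 : 0 < R := by linarith
    have q := hat_poly hω_nonneg hω_int hω_pos hC hD g hg.le (1 - 1 / ((N:ℝ) + 1))
      (1 - 1 / ((n:ℝ) + 1)) R (hT N).1 (hT N).2 (hT n).1 (hT n).2 hR1 (by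
        rw [hR, sub_sub_cancel, sub_sub_cancel]; apply le_of_eq; field_simp)
    have q' := Real.rpow_le_rpow h2.le q hp.le
    rw [Real.mul_rpow (by positivity) h1.le, mul_pow, Real.mul_rpow (by positivity) (by positivity)] at q'
    have hRg : (R ^ g) ^ p = R ^ ((g:ℝ) * p) := by
      rw [← Real.rpow_natCast R g, ← Real.rpow_mul hR0.le]
    have hn1 : (n:ℝ) + 1 = R * (N + 1) := by rw [hR]; field_simp
    have r1 : ((n:ℝ) + 1) ^ (α - 2) ≤ R ^ |α - 2| * ((N:ℝ) + 1) ^ (α - 2) := by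
      rw [hn1, Real.mul_rpow hR0.le (by positivity)]
      gcongr
      exact le_abs_self _
    have r2 : R ^ |α - 2| * R ^ ((g:ℝ) * p) ≤ R ^ γ := by
      rw [← Real.rpow_add hR0, ← Real.rpow_natCast R γ]
      exact Real.rpow_le_rpow_of_exponent_le hR1 (by linarith)
    simp only [hb]
    rw [← mul_div_assoc, div_le_div_iff₀ (by positivity) (by positivity)]
    rw [hRg] at q'
    calc ((n:ℝ) + 1) ^ (α - 2) * hat ω (1 - 1 / ((N:ℝ) + 1)) ^ p
        ≤ (R ^ |α - 2| * ((N:ℝ) + 1) ^ (α - 2)) *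
          (((2:ℝ) ^ g) ^ p * R ^ ((g:ℝ) * p) * hat ω (1 - 1 / ((n:ℝ) + 1)) ^ p) := by
          apply mul_le_mul r1 q' (by positivity) (by positivity)
      _ = ((2:ℝ) ^ g) ^ p * (R ^ |α - 2| * R ^ ((g:ℝ) * p)) * ((N:ℝ) + 1) ^ (α - 2) *
          hat ω (1 - 1 / ((n:ℝ) + 1)) ^ p := by ring
      _ ≤ _ := by gcongr
  have hpc := piece p α hp hω_nonneg hω_int hω_pos hC hD
  set F : ℝ → ℝ := fun s => ∫ t in (0:ℝ)..s, 1 / (hat ω t ^ p * (1 - t) ^ α) with hF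
  have hsub : ∀ x y, 0 ≤ x → x ≤ y → y < 1 →
      F y - F x = ∫ t in x..y, 1 / (hat ω t ^ p * (1 - t) ^ α) := by
    intro x y hx hxy hy
    simp only [hF]
    rw [← intervalIntegral.integral_add_adjacent_intervals
      (h_int p α hω_int hω_pos le_rfl hx (hxy.trans_lt hy)) (h_int p α hω_int hω_pos hx hxy hy)]
    ring
  have hsubn : ∀ n : ℕ, F (1 - 1 / ((n:ℝ) + 2)) - F (1 - 1 / ((n:ℝ) + 1)) =
      ∫ t in (1 - 1 / ((n:ℝ) + 1))..(1 - 1 / ((n:ℝ) + 2)), 1 / (hat ω t ^ p * (1 - t) ^ α) := by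
    intro n
    have h4 : 1 / ((n:ℝ) + 2) ≤ 1 / ((n:ℝ) + 1) :=
      one_div_le_one_div_of_le (by positivity) (by linarith)
    have h3 : 0 < 1 / ((n:ℝ) + 2) := by positivity
    exact hsub _ _ (hT n).1 (by linarith) (by linarith)
  have hCp : 0 < C ^ p := by positivity
  have hEp : 0 < E ^ p := by positivity
  have hBp : 0 < B ^ p := by positivity
  have h2α : 0 < (2:ℝ) ^ |α| := by positivity
  have main := abs_cmp a F (C ^ p * 2 ^ |α| * B ^ p + E ^ p * (2 * 2 ^ |α|))
    (E ^ p * ((2:ℝ) ^ g) ^ p * B ^ p) γ (by positivity) (by positivity) hapos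
    (by
      intro N n hNn
      calc a n ≤ E ^ p * b n := hab n
        _ ≤ E ^ p * (((2:ℝ) ^ g) ^ p * (((n:ℝ) + 1) / (N + 1)) ^ γ * b N) := by
          gcongr; exact hbg N n hNn
        _ ≤ E ^ p * (((2:ℝ) ^ g) ^ p * (((n:ℝ) + 1) / (N + 1)) ^ γ * (B ^ p * a N)) := by
          gcongr; exact hba N
        _ = _ := by ring)
    (by simp [hF])
    (by
      intro x y hx hxy hy
      have := hsub x y hx hxy hy
      have h0 : 0 ≤ ∫ t in x..y, 1 / (hat ω t ^ p * (1 - t) ^ α) := by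
        apply intervalIntegral.integral_nonneg hxy
        intro t ht
        have := hω_pos t ⟨hx.trans ht.1, ht.2.trans_lt hy⟩
        have : 0 < 1 - t := by linarith [ht.2]
        positivity
      linarith)
    (by
      intro n
      rw [hsubn]
      refine (hpc n).1.trans ?_
      have h1 := hapos n
      calc C ^ p * 2 ^ |α| * b n ≤ C ^ p * 2 ^ |α| * (B ^ p * a n) := by gcongr; exact hba n
        _ = C ^ p * 2 ^ |α| * B ^ p * a n := by ring
        _ ≤ _ := by gcongr; linarith [mul_pos hEp (mul_pos two_pos h2α)])
    (by
      intro n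
      have h2 := (hpc n).2
      rw [← hsubn] at h2
      have h0 : 0 ≤ F (1 - 1 / ((n:ℝ) + 2)) - F (1 - 1 / ((n:ℝ) + 1)) :=
        (pos_of_mul_pos_right ((hbpos n).trans_le h2) (by positivity)).le
      calc a n ≤ E ^ p * b n := hab n
        _ ≤ E ^ p * (2 * 2 ^ |α| * (F (1 - 1 / ((n:ℝ) + 2)) - F (1 - 1 / ((n:ℝ) + 1)))) := by
          gcongr
        _ = E ^ p * (2 * 2 ^ |α|) * (F (1 - 1 / ((n:ℝ) + 2)) - F (1 - 1 / ((n:ℝ) + 1))) := by ring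
        _ ≤ _ := by
          gcongr
          linarith [mul_pos (mul_pos hCp h2α) hBp])
  have hterm : ∀ (s : ℝ), (∑' n : ℕ, ((n : ℝ) + 1) ^ (α - 2) * s ^ n / moment ω (2 * n + 1) ^ p) =
      ∑' n : ℕ, a n * s ^ n := by
    intro s
    congr 1; ext n
    simp only [ha]; ring
  simp only [hterm]
  exact main
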